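/- Let G be a finite simple graph, U a stable subset of V(G), and α_v (v ∈ U) non-negative integers. Suppose that ∑_{v∈S} α_v ≤ |S| + |N(S)| − 1 for every non-empty S ⊆ U. Then for every X ⊆ E(G), A(X) + |V(G)| − ω_G(E(G)∖X) ≥ |V(G)| − 1, where A(X) = |V(G)| − 1 − ∑_{v∈U} max{α_v − |X ∩ δ_G(v)|, 0}. -/

import Mathlib

/-!
The claim amounts to `∑ v ∈ U, max (α v - |X ∩ δ(v)|) 0 + ω(E ∖ X) ≤ |V|`. Let `S` be the set of
those `v ∈ U` with `α v > |X ∩ δ(v)|`, and let `B` be the set of edges of `G` incident with `S`.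

* A connected component `c` of `(V, B)` that meets `S` contains both `S ∩ c` and `N(S ∩ c)`, so
  the hypothesis for `S ∩ c` bounds the sum of `α` over `S ∩ c` by `|c| - 1`; if `c` misses `S`
  this is clear. Adding over all components gives `∑ v ∈ S, α v + ω(B) ≤ |V|`
  (`sum_add_omegaE_le`).
* Adding one edge lowers the number of components by at most one (`omegaE_le_insert`). Adding to
  `E ∖ X` the at most `∑ v ∈ S, |X ∩ δ(v)|` edges of `X` incident with `S` yields a superset
  of `B`, hence `ω(E ∖ X) ≤ ω(B) + ∑ v ∈ S, |X ∩ δ(v)|`.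

Adding these two inequalities gives the result.
-/

open SimpleGraph

/-- The number of connected components of the graph with vertex set `V` and edge set `X`. -/
noncomputable def omegaE {V : Type*} (X : Set (Sym2 V)) : ℕ :=
  Nat.card (SimpleGraph.fromEdgeSet X).ConnectedComponent

lemma omegaE_anti {V : Type*} [Finite V] {Y Z : Set (Sym2 V)} (h : Y ⊆ Z) :
    omegaE Z ≤ omegaE Y := by
  refine Nat.card_le_card_of_surjective
    (ConnectedComponent.map (Hom.ofLE (fromEdgeSet_mono h))) ?_
  intro c
  induction c using ConnectedComponent.ind with
  | h v => exact ⟨(fromEdgeSet Y).connectedComponentMk v, rfl⟩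

/-- Adding one edge lowers the number of connected components by at most one. -/
lemma omegaE_le_insert {V : Type*} [Finite V] (Y : Set (Sym2 V)) (e : Sym2 V) :
    omegaE Y ≤ omegaE (insert e Y) + 1 := by
  classical
  induction e using Sym2.ind with
  | h a b =>
  -- `g` sends a vertex to its component, with the component of `a` merged into that of `b`;
  -- it is therefore constant on the components of the larger graph.
  let mk := (fromEdgeSet Y).connectedComponentMk
  let g : V → (fromEdgeSet Y).ConnectedComponent :=
    fun v => if mk v = mk a then mk b else mk v
  have hg : ∀ u v, (fromEdgeSet (insert s(a, b) Y)).Adj u v → g u = g v := by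
    intro u v huv
    rw [fromEdgeSet_adj, Set.mem_insert_iff] at huv
    obtain ⟨h | h, hne⟩ := huv
    · rw [Sym2.eq_iff] at h
      rcases h with ⟨rfl, rfl⟩ | ⟨rfl, rfl⟩ <;> simp [g]
    · have : mk u = mk v :=
        ConnectedComponent.sound ((fromEdgeSet_adj Y).2 ⟨h, hne⟩).reachable
      simp [g, this]
  have hw : ∀ u v (p : (fromEdgeSet (insert s(a, b) Y)).Walk u v), g u = g v := by
    intro u v p
    induction p with
    | nil => rfl
    | cons h _ ih => exact (hg _ _ h).trans ih
  let f : Option (fromEdgeSet (insert s(a, b) Y)).ConnectedComponent →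
      (fromEdgeSet Y).ConnectedComponent :=
    fun o => o.elim (mk a) (ConnectedComponent.lift g fun u v p _ => hw u v p)
  have hf : Function.Surjective f := by
    intro c
    induction c using ConnectedComponent.ind with
    | h v =>
    by_cases hv : mk v = mk a
    · exact ⟨none, hv.symm⟩
    · exact ⟨some ((fromEdgeSet _).connectedComponentMk v), if_neg hv⟩
  have := Nat.card_le_card_of_surjective f hf
  rwa [Finite.card_option] at this

lemma omegaE_le_union {V : Type*} [Finite V] (Y : Set (Sym2 V)) (F : Finset (Sym2 V)) :
    omegaE Y ≤ omegaE (Y ∪ F) + F.card := by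
  classical
  induction F using Finset.induction_on with
  | empty => simp
  | insert e F he ih =>
    have := omegaE_le_insert (Y ∪ F) e
    rw [Finset.card_insert_of_notMem he, Finset.coe_insert, Set.union_insert]
    omega

/-- The sum of the bounds `α(S ∩ c) ≤ |c| - 1` over all components `c` of the graph formed by
the edges incident with `S`. -/
lemma sum_add_omegaE_le {V : Type*} [Fintype V] [DecidableEq V] (G : SimpleGraph V)
    (S : Finset V) (α : V → ℕ)
    (h₁ : ∀ T ⊆ S, T.Nonempty →
      ∑ v ∈ T, α v ≤ T.card + ({v : V | v ∉ T ∧ ∃ u ∈ T, G.Adj u v}).ncard - 1) :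
    ∑ v ∈ S, α v + omegaE (⋃ v ∈ S, G.incidenceSet v) ≤ Fintype.card V := by
  classical
  set B : Set (Sym2 V) := ⋃ v ∈ S, G.incidenceSet v with hB
  let mk := (fromEdgeSet B).connectedComponentMk
  have key : ∀ c : (fromEdgeSet B).ConnectedComponent,
      ∑ v ∈ S with mk v = c, α v + 1 ≤ (Finset.univ.filter fun v => mk v = c).card := by
    intro c
    rcases (S.filter fun v => mk v = c).eq_empty_or_nonempty with h | h
    · rw [h]
      induction c using ConnectedComponent.ind with
      | h v =>
      simpa using Finset.card_pos.2 ⟨v, by simp [mk]⟩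
    · have h2 := h₁ _ (Finset.filter_subset _ _) h
      have hpos := Finset.card_pos.2 h
      set T := S.filter fun v => mk v = c with hT
      set N : Set V := {v : V | v ∉ T ∧ ∃ u ∈ T, G.Adj u v} with hN
      have hdisj : Disjoint T N.toFinset := by
        rw [Finset.disjoint_left]
        intro v hv hv'
        exact (Set.mem_toFinset.1 hv').1 hv
      have hsub : T ∪ N.toFinset ⊆ Finset.univ.filter fun v => mk v = c := by
        intro v hv
        rw [Finset.mem_filter]
        refine ⟨Finset.mem_univ _, ?_⟩
        rcases Finset.mem_union.1 hv with hv | hv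
        · exact (Finset.mem_filter.1 hv).2
        · obtain ⟨-, u, hu, huv⟩ := Set.mem_toFinset.1 hv
          obtain ⟨huS, huc⟩ := Finset.mem_filter.1 hu
          rw [← huc]
          refine ConnectedComponent.sound (Adj.reachable ?_)
          refine Adj.symm ((fromEdgeSet_adj B).2 ⟨?_, huv.ne⟩)
          exact Set.mem_biUnion huS ⟨huv, Sym2.mem_mk_left u v⟩
      have := Finset.card_le_card hsub
      rw [Finset.card_union_of_disjoint hdisj, ← Set.ncard_eq_toFinset_card'] at this
      omega
  have hsum := Finset.sum_le_sum fun c (_ : c ∈ Finset.univ) => key c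
  have hfib : ∑ c, ∑ v ∈ S with mk v = c, α v = ∑ v ∈ S, α v := by
    convert Finset.sum_fiberwise S mk α
  have hcard : ∑ c, (Finset.univ.filter fun v => mk v = c).card = Fintype.card V := by
    have := Finset.card_eq_sum_card_fiberwise (f := mk) (s := Finset.univ) (t := Finset.univ)
      (fun _ _ => Finset.mem_coe.2 (Finset.mem_univ _))
    rw [Finset.card_univ] at this
    convert this.symm
  rw [Finset.sum_add_distrib, hfib, hcard] at hsum
  simpa [omegaE, Nat.card_eq_fintype_card] using hsum

theorem stmt_15 {V : Type*} [Fintype V] [DecidableEq V] (G : SimpleGraph V)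
    (U : Finset V) (hU : ∀ u ∈ U, ∀ v ∈ U, ¬ G.Adj u v) (α : V → ℕ)
    (h₁ : ∀ S ⊆ U, S.Nonempty →
      ∑ v ∈ S, α v ≤ S.card + ({v : V | v ∉ S ∧ ∃ u ∈ S, G.Adj u v}).ncard - 1) :
    ∀ X ⊆ G.edgeSet,
      Fintype.card V - 1 ≤
        (Fintype.card V - 1 - ∑ v ∈ U, (α v - (X ∩ G.incidenceSet v).ncard)) +
          (Fintype.card V - omegaE (G.edgeSet \ X)) := by
  classical
  intro X _
  set x : V → ℕ := fun v => (X ∩ G.incidenceSet v).ncard with hx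
  let S := U.filter fun v => x v < α v
  have hS := sum_add_omegaE_le G S α
    fun T hT => h₁ T (hT.trans (Finset.filter_subset _ _))
  let F : Finset (Sym2 V) := S.biUnion fun v => (X ∩ G.incidenceSet v).toFinset
  have hF : F.card ≤ ∑ v ∈ S, x v := by
    refine Finset.card_biUnion_le.trans (Finset.sum_le_sum fun v _ => ?_)
    exact (Set.ncard_eq_toFinset_card' _).ge
  have hBF : (⋃ v ∈ S, G.incidenceSet v) ⊆ (G.edgeSet \ X) ∪ F := by
    intro e he
    simp only [Set.mem_iUnion] at he
    obtain ⟨v, hv, he⟩ := he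
    by_cases heX : e ∈ X
    · exact Or.inr (Finset.mem_coe.2
        (Finset.mem_biUnion.2 ⟨v, hv, Set.mem_toFinset.2 ⟨heX, he⟩⟩))
    · exact Or.inl ⟨he.1, heX⟩
  have h2 := omegaE_le_union (G.edgeSet \ X) F
  have h3 := omegaE_anti hBF
  have h4 : ∑ v ∈ U, (α v - x v) + ∑ v ∈ S, x v = ∑ v ∈ S, α v := by
    have : ∑ v ∈ U, (α v - x v) = ∑ v ∈ S, (α v - x v) := by
      refine (Finset.sum_subset (Finset.filter_subset _ _) fun v hv hvS => ?_).symm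
      have : ¬ x v < α v := fun h => hvS (Finset.mem_filter.2 ⟨hv, h⟩)
      omega
    rw [this, ← Finset.sum_add_distrib]
    refine Finset.sum_congr rfl fun v hv => ?_
    have := (Finset.mem_filter.1 hv).2
    omega
  change _ ≤ (_ - ∑ v ∈ U, (α v - x v)) + _
  omega
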